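/- arXiv:2312.17126 — 4 statements merged into one kernel-verified Lean document; each statement's English description precedes it below -/
import Mathlib

section
/- Let k be odd and let Γ^0, …, Γ^{2k+1} be complex n × n matrices satisfying the Lorentz Clifford relations (in 2k+2 generators) and the chiral reality pattern. Then M := Γ^1 Γ^3 ⋯ Γ^{2k+1} (the product of all odd-index Gamma matrices) is invertible, satisfies M conj(Γ^0) M^{−1} = Γ^0 and M conj(Γ^j) M^{−1} = −Γ^j for j = 1, …, 2k+1, and conj(M) · M = (−1)^{(k+1)(k+2)/2} I. Moreover, if additionally a matrix Γ^{2k+2} = i^{k+1} Γ^0 Γ^1 ⋯ Γ^{2k+1} is appended (the odd-dimensional case d = 2k+3), then also M conj(Γ^{2k+2}) M^{−1} = −Γ^{2k+2}. (This M is the time-reversal matrix M_T, and conj(M)·M computes T^2 on a Dirac fermion.) -/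
/-!
Conjugation by `M = Γ^1 Γ^3 ⋯ Γ^{2k+1}` only sees signs. Moving a matrix that anticommutes with
all `m = k+1` factors through `M` costs `(-1)^m = 1`, while moving one of the factors costs
`(-1)^(m-1) = -1` (`oddProd_mul_of_anticomm`, `oddProd_mul_factor`). Together with the reality
pattern this gives `M conj(Γ^0) = Γ^0 M` and `M conj(Γ^j) = -Γ^j M` for `j ≥ 1`: for odd `j` the
sign comes from the commutation, for even `j` from the conjugation.

Since `M` is real, `conj(M) M = M²`, which is computed by induction on the number of factors
(`oddProd_mul_self`); in particular `M` is invertible. For the appended matrix, `i^(k+1)` is real,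
and the intertwining relations multiply: the `2k+1` factors with index `≥ 1` contribute
`(-1)^(2k+1) = -1` (`intertwine_prod`).
-/

open Matrix

/-- Complex square matrices `Γ^0, …, Γ^{d-1}` satisfy the Lorentz Clifford relations if
`Γ^μ Γ^ν + Γ^ν Γ^μ = 2 η^{μν} I` where `η = diag(+1, -1, …, -1)`. -/
def LorentzClifford {α : Type*} [Fintype α] [DecidableEq α] (d : ℕ)
    (Γ : ℕ → Matrix α α ℂ) : Prop :=
  ∀ μ < d, ∀ ν < d, Γ μ * Γ ν + Γ ν * Γ μ =
    if μ = ν then (if μ = 0 then (2 : ℂ) else (-2 : ℂ)) • 1 else 0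

/-- The chiral reality pattern: `Γ^0` is real, `Γ^j` is real for odd `j`, and `Γ^j` is
imaginary for even `j ≥ 2` (here `conj` is the entrywise complex conjugate). -/
def ChiralReality {α : Type*} [Fintype α] [DecidableEq α] (d : ℕ)
    (Γ : ℕ → Matrix α α ℂ) : Prop :=
  (Γ 0).map (starRingEnd ℂ) = Γ 0 ∧
  (∀ j, 1 ≤ j → j < d → j % 2 = 1 → (Γ j).map (starRingEnd ℂ) = Γ j) ∧
  (∀ j, 1 ≤ j → j < d → j % 2 = 0 → (Γ j).map (starRingEnd ℂ) = -(Γ j))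

/-- The product `Γ^1 Γ^3 ⋯ Γ^{2m-1}` of the first `m` odd-index matrices. -/
def oddProd {R : Type*} [Ring R] (Γ : ℕ → R) : ℕ → R
  | 0 => 1
  | m + 1 => oddProd Γ m * Γ (2 * m + 1)

lemma oddProd_eq_ofFn {R : Type*} [Ring R] (Γ : ℕ → R) (m : ℕ) :
    (List.ofFn (fun a : Fin m => Γ (2 * (a : ℕ) + 1))).prod = oddProd Γ m := by
  induction m with
  | zero => simp [oddProd]
  | succ m ih =>
    rw [List.ofFn_succ', List.concat_eq_append, List.prod_append]
    simp [oddProd, ← ih]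

lemma oddProd_mul_of_anticomm {R : Type*} [Ring R] (Γ : ℕ → R) (X : R) (m : ℕ)
    (h : ∀ a < m, Γ (2 * a + 1) * X = -(X * Γ (2 * a + 1))) :
    oddProd Γ m * X = (-1) ^ m * (X * oddProd Γ m) := by
  induction m with
  | zero => simp [oddProd]
  | succ m ih =>
    have ih' := ih fun a ha => h a (by omega)
    rw [oddProd, mul_assoc, h m (by omega), mul_neg, ← mul_assoc, ih', pow_succ]
    simp [mul_assoc]

lemma oddProd_mul_factor {R : Type*} [Ring R] (Γ : ℕ → R) (m : ℕ)
    (h : ∀ a < m, ∀ b < m, a ≠ b →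
      Γ (2 * a + 1) * Γ (2 * b + 1) = -(Γ (2 * b + 1) * Γ (2 * a + 1)))
    (b : ℕ) (hb : b < m) :
    oddProd Γ m * Γ (2 * b + 1) = (-1) ^ (m + 1) * (Γ (2 * b + 1) * oddProd Γ m) := by
  induction m with
  | zero => omega
  | succ m ih =>
    rcases Nat.lt_succ_iff_lt_or_eq.mp hb with hlt | rfl
    · have ih' := ih (fun a ha b hb => h a (by omega) b (by omega)) hlt
      rw [oddProd, mul_assoc, h m (by omega) b hb (by omega), mul_neg, ← mul_assoc, ih',
        pow_succ _ (m + 1)]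
      simp [mul_assoc]
    · have key := oddProd_mul_of_anticomm Γ (Γ (2 * b + 1)) b
        fun a ha => h a (by omega) b hb (by omega)
      rw [oddProd, ← mul_assoc (Γ (2 * b + 1)), ← mul_assoc _ (Γ (2 * b + 1) * _), pow_succ,
        pow_succ, mul_assoc _ (-1) (-1), neg_one_mul, neg_neg, mul_one, ← key]

lemma oddProd_mul_self {R : Type*} [Ring R] (Γ : ℕ → R) (m : ℕ)
    (h : ∀ a < m, ∀ b < m, a ≠ b →
      Γ (2 * a + 1) * Γ (2 * b + 1) = -(Γ (2 * b + 1) * Γ (2 * a + 1)))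
    (hsq : ∀ a < m, Γ (2 * a + 1) * Γ (2 * a + 1) = -1) :
    oddProd Γ m * oddProd Γ m = (-1) ^ (m * (m + 1) / 2) := by
  induction m with
  | zero => simp [oddProd]
  | succ m ih =>
    have ih' := ih (fun a ha b hb => h a (by omega) b (by omega)) (fun a ha => hsq a (by omega))
    have key := oddProd_mul_of_anticomm Γ (Γ (2 * m + 1)) m
      fun a ha => h a (by omega) m (by omega) (by omega)
    have hexp : (m + 1) * (m + 1 + 1) / 2 = m * (m + 1) / 2 + (m + 1) := by
      rw [show (m + 1) * (m + 1 + 1) = m * (m + 1) + (m + 1) * 2 by ring,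
        Nat.add_mul_div_right _ _ (by norm_num)]
    have hcomm : Γ (2 * m + 1) * oddProd Γ m = (-1) ^ m * (oddProd Γ m * Γ (2 * m + 1)) := by
      rw [key, ← mul_assoc, ← pow_add, Even.neg_one_pow ⟨m, rfl⟩, one_mul]
    calc oddProd Γ m * Γ (2 * m + 1) * (oddProd Γ m * Γ (2 * m + 1))
        = oddProd Γ m * (Γ (2 * m + 1) * oddProd Γ m) * Γ (2 * m + 1) := by
          simp only [mul_assoc]
      _ = (-1) ^ m * (oddProd Γ m * oddProd Γ m) * (Γ (2 * m + 1) * Γ (2 * m + 1)) := by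
          rw [hcomm, ← mul_assoc (oddProd Γ m) ((-1) ^ m),
            ((Commute.neg_one_right (oddProd Γ m)).pow_right m).eq]
          simp only [mul_assoc]
      _ = (-1) ^ ((m + 1) * (m + 1 + 1) / 2) := by
          rw [ih', hsq m (by omega), hexp, ← pow_add, ← pow_succ]
          congr 1
          omega

/-- Intertwining relations for a ring endomorphism `σ` multiply along
`Γ^0 Γ^1 ⋯ Γ^m`, each factor after the first contributing a sign. -/
lemma intertwine_prod {R : Type*} [Ring R] (σ : R →+* R) (Γ : ℕ → R) (M : R) (m : ℕ)
    (h0 : M * σ (Γ 0) = Γ 0 * M)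
    (h : ∀ j, 1 ≤ j → j < m + 1 → M * σ (Γ j) = -(Γ j * M)) :
    M * σ ((List.range (m + 1)).map Γ).prod =
      (-1) ^ m * (((List.range (m + 1)).map Γ).prod * M) := by
  induction m with
  | zero => simpa using h0
  | succ m ih =>
    have ih' := ih fun j h1 h2 => h j h1 (by omega)
    rw [List.range_succ, List.map_append, List.prod_append, map_mul, ← mul_assoc, ih']
    simp only [List.map_cons, List.map_nil, List.prod_cons, List.prod_nil, mul_one]
    rw [mul_assoc, mul_assoc, h (m + 1) (by omega) (by omega), pow_succ]
    simp [mul_assoc]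

/-- For odd `k`, the time-reversal matrix `M_T = Γ^1 Γ^3 ⋯ Γ^{2k+1}` is invertible,
satisfies `M_T conj(Γ^0) M_T⁻¹ = Γ^0` and `M_T conj(Γ^j) M_T⁻¹ = -Γ^j` for
`1 ≤ j ≤ 2k+1`, and `conj(M_T) · M_T = (-1)^{(k+1)(k+2)/2} I` (computing `T²` on a
Dirac fermion).  Moreover, if `Γ^{2k+2} = i^{k+1} Γ^0 ⋯ Γ^{2k+1}` is appended (the
odd-dimensional case `d = 2k+3`), then also `M_T conj(Γ^{2k+2}) M_T⁻¹ = -Γ^{2k+2}`. -/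
theorem time_reversal_matrix_k_odd {n k : ℕ} (hk : Odd k)
    (Γ : ℕ → Matrix (Fin n) (Fin n) ℂ)
    (hΓ : LorentzClifford (2 * k + 2) Γ)
    (hreal : ChiralReality (2 * k + 2) Γ)
    (M : Matrix (Fin n) (Fin n) ℂ)
    (hM : M = (List.ofFn (fun a : Fin (k + 1) => Γ (2 * (a : ℕ) + 1))).prod) :
    IsUnit M ∧
    M * (Γ 0).map (starRingEnd ℂ) * M⁻¹ = Γ 0 ∧
    (∀ j, 1 ≤ j → j < 2 * k + 2 → M * (Γ j).map (starRingEnd ℂ) * M⁻¹ = -(Γ j)) ∧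
    M.map (starRingEnd ℂ) * M = ((-1 : ℂ) ^ ((k + 1) * (k + 2) / 2)) • 1 ∧
    (Γ (2 * k + 2) = Complex.I ^ (k + 1) • ((List.range (2 * k + 2)).map Γ).prod →
      M * (Γ (2 * k + 2)).map (starRingEnd ℂ) * M⁻¹ = -(Γ (2 * k + 2))) := by
  -- Entrywise conjugation as a ring endomorphism of the matrix ring.
  let σ : Matrix (Fin n) (Fin n) ℂ →+* Matrix (Fin n) (Fin n) ℂ := (starRingEnd ℂ).mapMatrix
  have hσ : ∀ X : Matrix (Fin n) (Fin n) ℂ, X.map (starRingEnd ℂ) = σ X := fun _ => rfl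
  obtain ⟨hr0, hrodd, hreven⟩ := hreal
  simp only [hσ] at hr0 hrodd hreven ⊢
  rw [oddProd_eq_ofFn] at hM
  have hanti : ∀ μ < 2 * k + 2, ∀ ν < 2 * k + 2, μ ≠ ν → Γ μ * Γ ν = -(Γ ν * Γ μ) := by
    intro μ hμ ν hν hne
    have := hΓ μ hμ ν hν
    rw [if_neg hne] at this
    exact eq_neg_of_add_eq_zero_left this
  have hsq : ∀ μ < 2 * k + 2, 1 ≤ μ → Γ μ * Γ μ = -1 := by
    intro μ hμ h1
    have := hΓ μ hμ μ hμ
    rw [if_pos rfl, if_neg (by omega), ← two_smul ℂ] at this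
    have h2 : (2 : ℂ) • (Γ μ * Γ μ) = (2 : ℂ) • (-1 : Matrix (Fin n) (Fin n) ℂ) := by
      rw [this, smul_neg, neg_smul]
    exact smul_right_injective _ (two_ne_zero : (2 : ℂ) ≠ 0) h2
  have hanti' : ∀ a < k + 1, ∀ b < k + 1, a ≠ b →
      Γ (2 * a + 1) * Γ (2 * b + 1) = -(Γ (2 * b + 1) * Γ (2 * a + 1)) :=
    fun a ha b hb hne => hanti _ (by omega) _ (by omega) (by omega)
  have hkeven : Even (k + 1) := hk.add_one
  have hMM : M * M = (-1) ^ ((k + 1) * (k + 2) / 2) := by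
    rw [hM]
    exact oddProd_mul_self Γ (k + 1) hanti' fun a ha => hsq _ (by omega) (by omega)
  have hunit : IsUnit M := by
    have hu : IsUnit (M * M) := by
      rw [hMM]
      exact (isUnit_one.neg).pow _
    exact ((Commute.refl M).isUnit_mul_iff.mp hu).1
  have hcancel : M * M⁻¹ = 1 :=
    Matrix.mul_nonsing_inv M ((Matrix.isUnit_iff_isUnit_det M).mp hunit)
  -- An even-index matrix anticommutes with all of the evenly many factors of `M`.
  have heven : ∀ j < 2 * k + 2, j % 2 = 0 → M * Γ j = Γ j * M := by
    intro j hj hj2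
    rw [hM, oddProd_mul_of_anticomm Γ (Γ j) (k + 1)
      fun a ha => hanti _ (by omega) _ hj (by omega), hkeven.neg_one_pow, one_mul]
  have hodd : ∀ j < 2 * k + 2, j % 2 = 1 → M * Γ j = -(Γ j * M) := by
    intro j hj hj2
    obtain ⟨b, rfl⟩ : ∃ b, j = 2 * b + 1 := ⟨j / 2, by omega⟩
    rw [hM, oddProd_mul_factor Γ (k + 1) hanti' b (by omega), hkeven.add_one.neg_one_pow,
      neg_one_mul]
  have hT0 : M * σ (Γ 0) = Γ 0 * M := by
    rw [hr0, heven 0 (by omega) rfl]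
  have hTj : ∀ j, 1 ≤ j → j < 2 * k + 2 → M * σ (Γ j) = -(Γ j * M) := by
    intro j h1 hj
    rcases Nat.mod_two_eq_zero_or_one j with h2 | h2
    · rw [hreven j h1 hj h2, mul_neg, heven j hj h2]
    · rw [hrodd j h1 hj h2, hodd j hj h2]
  have hMreal : σ M = M := by
    rw [hM, ← oddProd_eq_ofFn, map_list_prod, List.map_ofFn]
    congr 2
    funext a
    exact hrodd _ (by omega) (by omega) (by omega)
  refine ⟨hunit, ?_, ?_, ?_, ?_⟩
  · rw [hT0, mul_assoc, hcancel, mul_one]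
  · intro j h1 hj
    rw [hTj j h1 hj, neg_mul, mul_assoc, hcancel, mul_one]
  · rw [hMreal, hMM]
    rcases Nat.even_or_odd ((k + 1) * (k + 2) / 2) with h' | h' <;>
    simp [h'.neg_one_pow]
  · intro hlast
    have hprod := intertwine_prod σ Γ M (2 * k + 1) hT0 hTj
    rw [Odd.neg_one_pow ⟨k, rfl⟩, neg_one_mul] at hprod
    -- `k + 1` is even, so the prefactor `i^(k+1)` is real.
    have hI : (starRingEnd ℂ) (Complex.I ^ (k + 1)) = Complex.I ^ (k + 1) := by
      rw [map_pow, Complex.conj_I, hkeven.neg_pow]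
    have hσsmul : ∀ (c : ℂ) (X : Matrix (Fin n) (Fin n) ℂ),
        σ (c • X) = (starRingEnd ℂ) c • σ X := by
      intro c X
      ext i j
      simp [σ]
    rw [hlast, hσsmul, hI, mul_smul_comm, hprod, smul_mul_assoc, neg_mul, mul_assoc, hcancel,
      mul_one, smul_neg]
end

section
/- Let d = 2k+3 and let Γ^0, …, Γ^{2k+2} be complex n × n matrices (n ≥ 1) satisfying the Lorentz Clifford relations such that Γ^{2k+2} = i^{k+1} Γ^0 Γ^1 ⋯ Γ^{2k+1}. If M is an invertible matrix with M conj(Γ^0) M^{−1} = Γ^0 and M conj(Γ^j) M^{−1} = −Γ^j for all j = 1, …, 2k+1, then necessarily M conj(Γ^{2k+2}) M^{−1} = (−1)^k Γ^{2k+2}. Consequently, when k is even there is no invertible matrix M satisfying M conj(Γ^0) M^{−1} = Γ^0 and M conj(Γ^j) M^{−1} = −Γ^j for all j = 1, …, 2k+2 (i.e. the Dirac mass term breaks time reversal T in spacetime dimensions d ≡ 3 mod 4). -/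
/-!
The map `X ↦ M * conj X * M⁻¹` is multiplicative and conjugate-linear. On the product
`Γ^0 ⋯ Γ^{2k+1}` it therefore acts by one sign for each of the `2k+1` spatial factors, that is by
`-1` (`conj_prod_range`), while the prefactor `i^{k+1}` picks up `(-1)^{k+1}` under complex
conjugation; together this gives `(-1)^k`. For even `k`, a matrix `M` that also flips
`Γ^{2k+2}` would force `Γ^{2k+2} = -Γ^{2k+2}`, hence `Γ^{2k+2} = 0`, which contradicts
`(Γ^{2k+2})² = -1` because `n ≥ 1`.
-/

open Matrix

/-- Each spatial factor contributes a sign to the twisted conjugate of `Γ^0 Γ^1 ⋯ Γ^m`. -/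
theorem conj_prod_range {n N : ℕ} (Γ : ℕ → Matrix (Fin n) (Fin n) ℂ)
    (M : Matrix (Fin n) (Fin n) ℂ) (hM : IsUnit M)
    (h0 : M * (Γ 0).map (starRingEnd ℂ) * M⁻¹ = Γ 0)
    (hj : ∀ j, 1 ≤ j → j < N → M * (Γ j).map (starRingEnd ℂ) * M⁻¹ = -(Γ j))
    (m : ℕ) (hm : m + 1 ≤ N) :
    M * (((List.range (m + 1)).map Γ).prod).map (starRingEnd ℂ) * M⁻¹ =
      ((-1 : ℂ) ^ m) • ((List.range (m + 1)).map Γ).prod := by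
  have hinv : M⁻¹ * M = 1 := Matrix.nonsing_inv_mul M ((Matrix.isUnit_iff_isUnit_det M).1 hM)
  induction m with
  | zero => simpa using h0
  | succ m ih =>
    have ih' := ih (by omega)
    have hs := hj (m + 1) (by omega) (by omega)
    rw [List.range_succ, List.map_append, List.prod_append, List.map_singleton,
      List.prod_singleton, Matrix.map_mul]
    generalize ((List.range (m + 1)).map Γ).prod = P at ih' ⊢
    calc M * (P.map (starRingEnd ℂ) * (Γ (m + 1)).map (starRingEnd ℂ)) * M⁻¹
        = M * P.map (starRingEnd ℂ) * (M⁻¹ * M) * (Γ (m + 1)).map (starRingEnd ℂ) * M⁻¹ := by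
          rw [hinv]; simp only [mul_one, mul_assoc]
      _ = (M * P.map (starRingEnd ℂ) * M⁻¹) *
            (M * (Γ (m + 1)).map (starRingEnd ℂ) * M⁻¹) := by
          simp only [mul_assoc]
      _ = ((-1 : ℂ) ^ (m + 1)) • (P * Γ (m + 1)) := by
          rw [ih', hs, pow_succ]; simp

/-- For odd `d = 2k+3` with `Γ^{2k+2} = i^{k+1} Γ^0 ⋯ Γ^{2k+1}`: any invertible `M` with
`M conj(Γ^0) M⁻¹ = Γ^0` and `M conj(Γ^j) M⁻¹ = -Γ^j` for `1 ≤ j ≤ 2k+1` necessarily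
satisfies `M conj(Γ^{2k+2}) M⁻¹ = (-1)^k Γ^{2k+2}`; hence for even `k` there is no
invertible `M` with those relations for all `j = 1, …, 2k+2` (the Dirac mass term breaks
time reversal `T` in spacetime dimensions `d ≡ 3 mod 4`). -/
theorem mass_breaks_T_odd_d {n k : ℕ} (hn : 1 ≤ n)
    (Γ : ℕ → Matrix (Fin n) (Fin n) ℂ)
    (hΓ : LorentzClifford (2 * k + 3) Γ)
    (hlast : Γ (2 * k + 2) = Complex.I ^ (k + 1) • ((List.range (2 * k + 2)).map Γ).prod) :
    (∀ M : Matrix (Fin n) (Fin n) ℂ, IsUnit M →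
      M * (Γ 0).map (starRingEnd ℂ) * M⁻¹ = Γ 0 →
      (∀ j, 1 ≤ j → j < 2 * k + 2 → M * (Γ j).map (starRingEnd ℂ) * M⁻¹ = -(Γ j)) →
      M * (Γ (2 * k + 2)).map (starRingEnd ℂ) * M⁻¹ = ((-1 : ℂ) ^ k) • Γ (2 * k + 2)) ∧
    (Even k → ¬ ∃ M : Matrix (Fin n) (Fin n) ℂ, IsUnit M ∧
      M * (Γ 0).map (starRingEnd ℂ) * M⁻¹ = Γ 0 ∧
      ∀ j, 1 ≤ j → j < 2 * k + 3 → M * (Γ j).map (starRingEnd ℂ) * M⁻¹ = -(Γ j)) := by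
  have key : ∀ M : Matrix (Fin n) (Fin n) ℂ, IsUnit M →
      M * (Γ 0).map (starRingEnd ℂ) * M⁻¹ = Γ 0 →
      (∀ j, 1 ≤ j → j < 2 * k + 2 → M * (Γ j).map (starRingEnd ℂ) * M⁻¹ = -(Γ j)) →
      M * (Γ (2 * k + 2)).map (starRingEnd ℂ) * M⁻¹ = ((-1 : ℂ) ^ k) • Γ (2 * k + 2) := by
    intro M hM h0 hj
    have hp := conj_prod_range Γ M hM h0 hj (2 * k + 1) le_rfl
    rw [hlast]
    generalize ((List.range (2 * k + 2)).map Γ).prod = P at hp ⊢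
    have hmap : (Complex.I ^ (k + 1) • P).map (starRingEnd ℂ) =
        ((-1 : ℂ) ^ (k + 1) * Complex.I ^ (k + 1)) • P.map (starRingEnd ℂ) := by
      ext a b
      simp [← mul_pow]
    have hsgn : (-1 : ℂ) ^ (2 * k + 1) = -1 := by simp [pow_succ, pow_mul]
    rw [hmap, Matrix.mul_smul, Matrix.smul_mul, hp, hsgn, smul_smul, smul_smul]
    congr 1
    ring
  refine ⟨key, ?_⟩
  rintro hk ⟨M, hM, h0, hj⟩
  have h1 := key M hM h0 (fun j h h' => hj j h (by omega))
  rw [hj (2 * k + 2) (by omega) (by omega), hk.neg_one_pow, one_smul] at h1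
  have hz : Γ (2 * k + 2) = 0 := by
    ext a b
    exact self_eq_neg.1 (congrFun (congrFun h1 a) b).symm
  have hsq := hΓ (2 * k + 2) (by omega) (2 * k + 2) (by omega)
  rw [hz] at hsq
  have := congrFun (congrFun hsq ⟨0, hn⟩) ⟨0, hn⟩
  simp at this
end

section
/- Let d = 2k+2 and let Γ^0, …, Γ^{2k+1} be complex n × n matrices satisfying the Lorentz Clifford relations and the chiral reality pattern, and fix j ∈ {1, …, 2k+1}. Set M_R := Γ^0 Γ^1 ⋯ Γ^{j−1} Γ^{j+1} ⋯ Γ^{2k+1}. If k is odd, set M_C := Γ^2 Γ^4 ⋯ Γ^{2k}; then M_R M_C conj(M_R) conj(M_C) = (−1)^{k(k−1)/2} I. If k is even, set M_C := Γ^0 Γ^1 Γ^3 ⋯ Γ^{2k+1}; then M_R M_C conj(M_R) conj(M_C) = −(−1)^{k(k+1)/2} I. (These identities compute (CR_j)^2 on a Dirac fermion; the result is independent of the phases η_C, η_{R_j}.) -/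
/-!
Both identities are sign counts for products `P L = ∏_{i ∈ L} Γ^i` over lists of indices.
Conjugation multiplies `P L` by `(-1)` to the number of imaginary factors (`gammaProd_conj`), and
for `L` without repetitions `(P L)²` is the sign `(-1)^{l(l-1)/2}` of the reversal times the
product of the squares `(Γ^i)²` (`gammaProd_sq`).  Since `M_R` has `2k+1` factors, `Γ^a` commutes
with it when `a` occurs in `M_R` and anticommutes with it when `a = j`; hence moving `M_C` past
`M_R` costs the sign `(-1)^{[j ∈ C]}` (`gammaProd_swap_reflection`).  Collecting everything
(`reflection_mul_charge`) leaves a parity computation.  The dependence on `j` cancels because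
`M_R` has `k - [Γ^j imaginary]` imaginary factors, while `[j ∈ C]` is `[Γ^j imaginary]` for the
first choice of `M_C` and `1 - [Γ^j imaginary]` for the second.
-/

open Matrix

/-- The ordered product of the `Γ^i` over a list of indices. -/
def gammaProd {n : ℕ} (Γ : ℕ → Matrix (Fin n) (Fin n) ℂ) (L : List ℕ) :
    Matrix (Fin n) (Fin n) ℂ :=
  (L.map Γ).prod

/-- Whether `Γ^i` is imaginary in the chiral reality pattern: `i` is even and nonzero. -/
def isImag (i : ℕ) : Bool := decide (i % 2 = 0 ∧ i ≠ 0)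

/-- The list `0, …, ĵ, …, 2k+1` of indices occurring in `M_R`. -/
def reflectionList (k j : ℕ) : List ℕ := (List.range (2 * k + 2)).filter (fun i => i ≠ j)

section
variable {n d : ℕ} {Γ : ℕ → Matrix (Fin n) (Fin n) ℂ}

lemma gammaProd_cons (a : ℕ) (L : List ℕ) : gammaProd Γ (a :: L) = Γ a * gammaProd Γ L := by
  simp [gammaProd]

lemma gamma_anticomm (hΓ : LorentzClifford d Γ) {a b : ℕ} (ha : a < d) (hb : b < d)
    (hab : a ≠ b) : Γ a * Γ b = (-1 : ℂ) • (Γ b * Γ a) := by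
  have h := hΓ a ha b hb
  rw [if_neg hab] at h
  rw [neg_one_smul]
  exact eq_neg_of_add_eq_zero_left h

lemma gamma_sq (hΓ : LorentzClifford d Γ) {a : ℕ} (ha : a < d) :
    Γ a * Γ a = (-1 : ℂ) ^ (if a = 0 then 0 else 1) • 1 := by
  have h := hΓ a ha a ha
  rw [if_pos rfl, ← two_smul ℂ] at h
  have h2 : Γ a * Γ a = (2⁻¹ : ℂ) • ((2 : ℂ) • (Γ a * Γ a)) := by
    rw [smul_smul]; norm_num
  rw [h2, h, smul_smul]
  split_ifs <;> norm_num

lemma gammaProd_conj (hreal : ChiralReality d Γ) (L : List ℕ) (hL : ∀ i ∈ L, i < d) :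
    (gammaProd Γ L).map (starRingEnd ℂ) = (-1 : ℂ) ^ L.countP isImag • gammaProd Γ L := by
  induction L with
  | nil => simp [gammaProd]
  | cons a L ih =>
    have ha : a < d := hL a (by simp)
    have ih' := ih (fun i hi => hL i (by simp [hi]))
    rw [gammaProd_cons, Matrix.map_mul, ih', List.countP_cons]
    by_cases h0 : a = 0
    · subst h0
      simp [hreal.1, isImag]
    · rcases Nat.mod_two_eq_zero_or_one a with h | h
      · rw [hreal.2.2 a (by omega) ha h]
        simp [isImag, h, h0, pow_succ]
      · rw [hreal.2.1 a (by omega) ha h]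
        simp [isImag, h]

/-- Moving `Γ^a` through a product costs a sign for each factor other than `Γ^a` itself. -/
lemma gamma_mul_gammaProd (hΓ : LorentzClifford d Γ) {a : ℕ} (ha : a < d) (L : List ℕ)
    (hL : ∀ i ∈ L, i < d) :
    Γ a * gammaProd Γ L = (-1 : ℂ) ^ (L.length + L.count a) • (gammaProd Γ L * Γ a) := by
  induction L with
  | nil => simp [gammaProd]
  | cons b L ih =>
    have hb : b < d := hL b (by simp)
    have ih' := ih (fun i hi => hL i (by simp [hi]))
    rw [gammaProd_cons, List.length_cons, List.count_cons, mul_assoc (Γ b)]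
    by_cases hab : b = a
    · subst hab
      rw [ih', Matrix.mul_smul]
      congr 1
      simp only [beq_self_eq_true, if_true]
      ring
    · rw [← mul_assoc, gamma_anticomm hΓ ha hb (Ne.symm hab), Matrix.smul_mul, mul_assoc, ih',
        Matrix.mul_smul, smul_smul]
      congr 1
      simp only [beq_iff_eq, hab, if_false]
      ring

lemma gammaProd_sq (hΓ : LorentzClifford d Γ) (L : List ℕ) (hL : ∀ i ∈ L, i < d)
    (hnd : L.Nodup) :
    gammaProd Γ L * gammaProd Γ L =
      (-1 : ℂ) ^ (L.length.choose 2 + L.countP (fun i => i ≠ 0)) • 1 := by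
  induction L with
  | nil => simp [gammaProd]
  | cons a L ih =>
    have ha : a < d := hL a (by simp)
    have hL' : ∀ i ∈ L, i < d := fun i hi => hL i (by simp [hi])
    obtain ⟨hmem, hnd'⟩ := List.nodup_cons.mp hnd
    have ih' := ih hL' hnd'
    have hsw := gamma_mul_gammaProd hΓ ha L hL'
    rw [List.count_eq_zero_of_not_mem hmem] at hsw
    have hsq := gamma_sq hΓ ha
    have key : gammaProd Γ (a :: L) * gammaProd Γ (a :: L) =
        (-1 : ℂ) ^ (L.length + 0) • (gammaProd Γ L * (Γ a * Γ a) * gammaProd Γ L) := by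
      rw [gammaProd_cons]
      nth_rewrite 1 [hsw]
      simp only [Matrix.smul_mul, mul_assoc]
    rw [key, hsq, Matrix.mul_smul, mul_one, Matrix.smul_mul, ih', smul_smul, smul_smul,
      List.countP_cons, List.length_cons, Nat.choose_succ_succ' L.length 1, Nat.choose_one_right]
    congr 1
    by_cases h0 : a = 0
    · simp [h0]; ring
    · simp [h0]; ring

end

section
variable {k j : ℕ}

lemma reflectionList_lt {i : ℕ} (hi : i ∈ reflectionList k j) : i < 2 * k + 2 := by
  simp [reflectionList] at hi
  exact hi.1

lemma reflectionList_nodup : (reflectionList k j).Nodup := List.nodup_range.filter _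

lemma reflectionList_perm (hj : j ≤ 2 * k + 1) :
    (List.range (2 * k + 2)).Perm (j :: reflectionList k j) := by
  have h := List.perm_cons_erase (a := j) (l := List.range (2 * k + 2))
    (List.mem_range.mpr (by omega))
  rw [List.nodup_range.erase_eq_filter] at h
  convert h using 3
  unfold reflectionList
  congr 1
  funext i
  by_cases h : i = j <;> simp [h]

lemma reflectionList_length (hj : j ≤ 2 * k + 1) : (reflectionList k j).length = 2 * k + 1 := by
  have h := (reflectionList_perm hj).length_eq
  simp at h
  omega

lemma countP_isImag_range (k : ℕ) : (List.range (2 * k + 2)).countP isImag = k := by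
  induction k with
  | zero => decide
  | succ k ih =>
    rw [show 2 * (k + 1) + 2 = 2 * k + 2 + 1 + 1 by ring, List.range_succ, List.range_succ,
      List.countP_append, List.countP_append, ih]
    have h1 : isImag (2 * k + 2) = true := by simp [isImag]
    have h2 : isImag (2 * k + 2 + 1) = false := by simp [isImag]; omega
    simp [h1, h2]

lemma countP_ne_zero_range (m : ℕ) : (List.range (m + 1)).countP (fun i => i ≠ 0) = m := by
  induction m with
  | zero => decide
  | succ m ih => rw [List.range_succ, List.countP_append, ih]; simp

lemma reflectionList_countP_isImag (hj : j ≤ 2 * k + 1) :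
    (reflectionList k j).countP isImag + (if isImag j then 1 else 0) = k := by
  have h := (reflectionList_perm hj).countP_eq isImag
  rw [countP_isImag_range, List.countP_cons] at h
  exact h.symm

lemma reflectionList_countP_ne_zero (hj1 : 1 ≤ j) (hj : j ≤ 2 * k + 1) :
    (reflectionList k j).countP (fun i => i ≠ 0) = 2 * k := by
  have h := (reflectionList_perm hj).countP_eq (fun i => i ≠ 0)
  rw [countP_ne_zero_range, List.countP_cons] at h
  have : j ≠ 0 := by omega
  simp [this] at h
  simp
  omega

variable {n : ℕ} {Γ : ℕ → Matrix (Fin n) (Fin n) ℂ}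

/-- As `M_R` has an odd number of factors, all `Γ^a` with `a ≠ j` commute with it, while `Γ^j`
anticommutes with it. -/
lemma gammaProd_swap_reflection (hj : j ≤ 2 * k + 1) (hΓ : LorentzClifford (2 * k + 2) Γ)
    (C : List ℕ) (hC : ∀ i ∈ C, i < 2 * k + 2) :
    gammaProd Γ C * gammaProd Γ (reflectionList k j) =
      (-1 : ℂ) ^ C.count j • (gammaProd Γ (reflectionList k j) * gammaProd Γ C) := by
  induction C with
  | nil => simp [gammaProd]
  | cons a C ih =>
    have ha : a < 2 * k + 2 := hC a (by simp)
    have ih' := ih (fun i hi => hC i (by simp [hi]))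
    have hs := gamma_mul_gammaProd hΓ ha (reflectionList k j) (fun i hi => reflectionList_lt hi)
    rw [gammaProd_cons, mul_assoc, ih', Matrix.mul_smul, ← mul_assoc, hs, Matrix.smul_mul,
      smul_smul, mul_assoc, reflectionList_length hj, List.count_cons]
    congr 1
    by_cases haj : a = j
    · subst haj
      have : (reflectionList k a).count a = 0 :=
        List.count_eq_zero_of_not_mem (by simp [reflectionList])
      simp [this, pow_succ, pow_mul]
    · have : (reflectionList k j).count a = 1 :=
        List.count_eq_one_of_mem reflectionList_nodup (by simp [reflectionList, ha, haj])
      simp [this, haj, pow_succ, pow_mul]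

/-- The total sign of `M_R M_C conj(M_R) conj(M_C)`, for an arbitrary repetition-free list `C` of
indices in `M_C`. -/
lemma reflection_mul_charge (hj1 : 1 ≤ j) (hj : j ≤ 2 * k + 1)
    (hΓ : LorentzClifford (2 * k + 2) Γ) (hreal : ChiralReality (2 * k + 2) Γ)
    (C : List ℕ) (hC : ∀ i ∈ C, i < 2 * k + 2) (hnd : C.Nodup) :
    gammaProd Γ (reflectionList k j) * gammaProd Γ C *
        (gammaProd Γ (reflectionList k j)).map (starRingEnd ℂ) *
        (gammaProd Γ C).map (starRingEnd ℂ) =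
      (-1 : ℂ) ^ ((reflectionList k j).countP isImag + C.countP isImag + C.count j +
        k + (C.length.choose 2 + C.countP (fun i => i ≠ 0))) • 1 := by
  have hR : ∀ i ∈ reflectionList k j, i < 2 * k + 2 := fun i hi => reflectionList_lt hi
  have hsqR := gammaProd_sq hΓ _ hR reflectionList_nodup
  have hsqC := gammaProd_sq hΓ C hC hnd
  have hsw := gammaProd_swap_reflection hj hΓ C hC
  rw [gammaProd_conj hreal _ hR, gammaProd_conj hreal C hC]
  rw [reflectionList_length hj, reflectionList_countP_ne_zero hj1 hj] at hsqR
  have hch : (2 * k + 1).choose 2 = 2 * (k * k) + k := by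
    rw [Nat.choose_two_right, Nat.add_sub_cancel,
      show (2 * k + 1) * (2 * k) = (2 * (k * k) + k) * 2 by ring]
    omega
  have hsgn : (-1 : ℂ) ^ ((2 * k + 1).choose 2 + 2 * k) = (-1 : ℂ) ^ k := by
    rw [hch]; simp [pow_add, pow_mul]
  rw [hsgn] at hsqR
  set R := gammaProd Γ (reflectionList k j)
  set P := gammaProd Γ C
  have h4 : R * P * R * P = (-1 : ℂ) ^ C.count j • ((R * R) * (P * P)) := by
    rw [mul_assoc R P R, hsw]
    simp only [Matrix.mul_smul, Matrix.smul_mul, mul_assoc]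
  simp only [Matrix.mul_smul, Matrix.smul_mul]
  rw [h4, hsqR, hsqC]
  simp only [Matrix.mul_smul, smul_smul, mul_one, ← pow_add]
  congr 2
  ring

end

/-- For `d = 2k+2` and `1 ≤ j ≤ 2k+1`, set `M_R = Γ^0 ⋯ Γ̂^j ⋯ Γ^{2k+1}`.  For odd `k`,
with `M_C = Γ^2 Γ^4 ⋯ Γ^{2k}` one has `M_R M_C conj(M_R) conj(M_C) = (-1)^{k(k-1)/2} I`;
for even `k`, with `M_C = Γ^0 Γ^1 Γ^3 ⋯ Γ^{2k+1}` one has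
`M_R M_C conj(M_R) conj(M_C) = -(-1)^{k(k+1)/2} I` (computing `(CR_j)²` on a Dirac
fermion, independently of the phases `η_C`, `η_{R_j}`). -/
theorem CR_square {n k j : ℕ} (hj1 : 1 ≤ j) (hj2 : j ≤ 2 * k + 1)
    (Γ : ℕ → Matrix (Fin n) (Fin n) ℂ)
    (hΓ : LorentzClifford (2 * k + 2) Γ)
    (hreal : ChiralReality (2 * k + 2) Γ)
    (MR MCodd MCeven : Matrix (Fin n) (Fin n) ℂ)
    (hMR : MR = (((List.range (2 * k + 2)).filter (fun i => i ≠ j)).map Γ).prod)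
    (hMCodd : MCodd = (List.ofFn (fun a : Fin k => Γ (2 * ((a : ℕ) + 1)))).prod)
    (hMCeven : MCeven = Γ 0 * (List.ofFn (fun a : Fin (k + 1) => Γ (2 * (a : ℕ) + 1))).prod) :
    (Odd k → MR * MCodd * MR.map (starRingEnd ℂ) * MCodd.map (starRingEnd ℂ) =
      ((-1 : ℂ) ^ (k * (k - 1) / 2)) • 1) ∧
    (Even k → MR * MCeven * MR.map (starRingEnd ℂ) * MCeven.map (starRingEnd ℂ) =
      (-((-1 : ℂ) ^ (k * (k + 1) / 2))) • 1) := by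
  have hR : MR = gammaProd Γ (reflectionList k j) := hMR
  have hsign : ∀ a b : ℕ, a % 2 = b % 2 → (-1 : ℂ) ^ a = (-1 : ℂ) ^ b := by
    intro a b h
    rw [neg_one_pow_eq_pow_mod_two, h, ← neg_one_pow_eq_pow_mod_two]
  have hcR := reflectionList_countP_isImag hj2
  constructor
  · intro hk
    set C : List ℕ := (List.range k).map (fun a => 2 * (a + 1)) with hCdef
    have hP : MCodd = gammaProd Γ C := by
      rw [hMCodd, gammaProd, List.ofFn_eq_map, hCdef, List.map_map, ← List.map_coe_finRange_eq_range,
        List.map_map]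
      rfl
    have hC : ∀ i ∈ C, i < 2 * k + 2 := by
      intro i hi
      simp [hCdef] at hi
      omega
    have hnd : C.Nodup := List.nodup_range.map (fun a b h => by simpa using h)
    have hlen : C.length = k := by simp [hCdef]
    have himag : C.countP isImag = k := by
      rw [← hlen, List.countP_eq_length]
      intro i hi
      simp [hCdef] at hi
      simp [isImag]; omega
    have hne : C.countP (fun i => i ≠ 0) = k := by
      rw [← hlen, List.countP_eq_length]
      intro i hi
      simp [hCdef] at hi
      simp; omega
    have hcount : C.count j = if isImag j then 1 else 0 := by
      rw [hnd.count]
      congr 1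
      simp only [hCdef, List.mem_map, List.mem_range, isImag, decide_eq_true_eq, eq_iff_iff]
      constructor
      · rintro ⟨a, _, rfl⟩; omega
      · rintro ⟨h1, h2⟩; exact ⟨j / 2 - 1, by omega, by omega⟩
    rw [hR, hP, reflection_mul_charge hj1 hj2 hΓ hreal C hC hnd, himag, hlen, hne, hcount,
      ← Nat.choose_two_right]
    congr 1
    apply hsign
    omega
  · intro hk
    set C : List ℕ := 0 :: (List.range (k + 1)).map (fun a => 2 * a + 1) with hCdef
    have hP : MCeven = gammaProd Γ C := by
      rw [hMCeven, hCdef, gammaProd_cons, gammaProd, List.ofFn_eq_map, List.map_map,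
        ← List.map_coe_finRange_eq_range, List.map_map]
      rfl
    have hC : ∀ i ∈ C, i < 2 * k + 2 := by
      intro i hi
      simp [hCdef] at hi
      omega
    have hnd : C.Nodup :=
      List.nodup_cons.mpr ⟨by simp, List.nodup_range.map (fun a b h => by simpa using h)⟩
    have hlen : C.length = k + 2 := by simp [hCdef]
    have himag : C.countP isImag = 0 := by
      rw [List.countP_eq_zero]
      intro i hi
      simp [hCdef] at hi
      simp [isImag]; omega
    have hne : C.countP (fun i => i ≠ 0) = k + 1 := by
      rw [hCdef, List.countP_cons_of_neg (by simp)]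
      rw [List.countP_eq_length.mpr]
      · simp
      · intro i hi
        simp at hi
        simp; omega
    have hcount : C.count j = if isImag j then 0 else 1 := by
      rw [hnd.count, ← ite_not]
      congr 1
      simp only [hCdef, List.mem_cons, List.mem_map, List.mem_range, isImag, decide_eq_true_eq,
        eq_iff_iff]
      constructor
      · intro h
        by_contra h'
        exact h (Or.inr ⟨j / 2, by omega, by omega⟩)
      · rintro h (h' | ⟨a, _, rfl⟩) <;> omega
    have hch : (k + 2).choose 2 = k + 1 + k * (k + 1) / 2 := by
      rw [Nat.choose_succ_succ' (k + 1) 1, Nat.choose_one_right, Nat.choose_two_right,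
        Nat.add_sub_cancel, mul_comm]
    rw [hR, hP, reflection_mul_charge hj1 hj2 hΓ hreal C hC hnd, himag, hlen, hne, hcount, hch]
    congr 1
    rw [← neg_one_mul ((-1 : ℂ) ^ (k * (k + 1) / 2)), ← pow_succ']
    apply hsign
    have hite : (if isImag j then 1 else 0) + (if isImag j then 0 else 1) = 1 := by
      split_ifs <;> rfl
    obtain ⟨m, rfl⟩ := hk
    omega
end

section
/- Let d = 2k+2 and let Γ^0, …, Γ^{2k+1} be complex n × n matrices satisfying the Lorentz Clifford relations and the chiral reality pattern, and let η_C, η_T be complex numbers. If k is odd, set M_T := η_T Γ^1 Γ^3 ⋯ Γ^{2k+1} and M_C := η_C Γ^2 Γ^4 ⋯ Γ^{2k}; then conj(M_T M_C) · conj(M_T) · conj(M_C) = (η_T^* η_C^*)^2 I. If k is even, set M_T := η_T Γ^0 Γ^2 ⋯ Γ^{2k} and M_C := η_C Γ^0 Γ^1 Γ^3 ⋯ Γ^{2k+1}; then conj(M_T M_C) · conj(M_T) · conj(M_C) = −(η_T^* η_C^*)^2 I. (These identities compute (CT)^2 on a Dirac fermion, showing its dependence on the phases η_C, η_T.) -/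
/-!
Write `O = Γ^1 Γ^3 ⋯ Γ^{2k+1}` and `E = Γ^2 Γ^4 ⋯ Γ^{2k}`. Conjugation fixes `O` and `Γ^0` and
multiplies `E` by `(-1)^k`; since `E` occurs twice in each expression, the conjugations have no net
effect apart from conjugating the phases. For `k` odd the claim is thus about `(O E)^2`. For `k`
even, `Γ^0` commutes with `E`, so `Γ^0 E Γ^0 = E` and the claim is about `(E O)^2`.

Both `O E` and `E O` are products of `N = 2k+1` pairwise anticommuting matrices of square `-1`.
Such a product squares to `(-1)^{N(N+1)/2}` (`sq_prod_of_anticomm`), which here is `(-1)^{k+1}`.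
-/

open Matrix

section Signs

variable {R : Type*} [Ring R]

/-- Moving `a` through a product of elements anticommuting with it gives one sign per factor. -/
lemma prod_mul_of_anticomm (a : R) (l : List R) (h : ∀ x ∈ l, x * a = -(a * x)) :
    l.prod * a = ((-1 : ℤ) ^ l.length) • (a * l.prod) := by
  induction l with
  | nil => simp
  | cons b l ih =>
    have hb := h b (by simp)
    have hl := ih (fun x hx => h x (by simp [hx]))
    rw [List.prod_cons, mul_assoc, hl, mul_smul_comm, ← mul_assoc, hb, List.length_cons, pow_succ,
      mul_smul]
    simp [mul_assoc]

lemma sq_prod_of_anticomm (l : List R) (hsq : ∀ x ∈ l, x * x = -1)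
    (hac : l.Pairwise fun x y => y * x = -(x * y)) :
    l.prod * l.prod = ((-1 : ℤ) ^ (l.length * (l.length + 1) / 2)) • (1 : R) := by
  induction l with
  | nil => simp
  | cons a l ih =>
    rw [List.pairwise_cons] at hac
    have ha := hsq a (by simp)
    have hl := ih (fun x hx => hsq x (by simp [hx])) hac.2
    have hm := prod_mul_of_anticomm a l hac.1
    -- Triangular numbers: the exponent grows by the new length.
    have hT : (l.length + 1) * (l.length + 1 + 1) / 2
        = l.length + 1 + l.length * (l.length + 1) / 2 := by
      rw [show (l.length + 1) * (l.length + 1 + 1)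
        = l.length * (l.length + 1) + (l.length + 1) * 2 by ring,
        Nat.add_mul_div_right _ _ two_pos, add_comm]
    calc (a :: l).prod * (a :: l).prod = a * (l.prod * a) * l.prod := by
          simp only [List.prod_cons, mul_assoc]
      _ = ((-1 : ℤ) ^ l.length) • ((a * a) * (l.prod * l.prod)) := by
          rw [hm]; simp only [mul_smul_comm, smul_mul_assoc, mul_assoc]
      _ = _ := by
          rw [ha, hl, List.length_cons, hT, pow_add, pow_succ, mul_smul, mul_smul]
          simp

/-- A ring homomorphism scaling every factor by the integer `c` scales a product of `m` factors
by `c ^ m`. -/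
lemma map_prod_of_map_eq_smul (φ : R →+* R) (c : ℤ) (l : List R) (h : ∀ x ∈ l, φ x = c • x) :
    φ l.prod = c ^ l.length • l.prod := by
  induction l with
  | nil => simp
  | cons b l ih =>
    rw [List.prod_cons, map_mul, h b (by simp), ih (fun x hx => h x (by simp [hx])),
      smul_mul_smul_comm, List.length_cons, pow_succ']

end Signs

section Gamma

variable {n d : ℕ} {Γ : ℕ → Matrix (Fin n) (Fin n) ℂ}

lemma LorentzClifford.anticomm (hΓ : LorentzClifford d Γ) {i j : ℕ} (hi : i < d) (hj : j < d)
    (hij : i ≠ j) : Γ j * Γ i = -(Γ i * Γ j) := by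
  have h := hΓ j hj i hi
  rw [if_neg hij.symm] at h
  exact eq_neg_of_add_eq_zero_left h

lemma LorentzClifford.sq_zero (hΓ : LorentzClifford d Γ) (hd : 0 < d) : Γ 0 * Γ 0 = 1 := by
  have h := hΓ 0 hd 0 hd
  rw [if_pos rfl, if_pos rfl, ← two_smul ℂ] at h
  exact smul_right_injective _ (two_ne_zero' ℂ) h

lemma LorentzClifford.sq_pos (hΓ : LorentzClifford d Γ) {i : ℕ} (hi : i < d) (h0 : 0 < i) :
    Γ i * Γ i = -1 := by
  have h := hΓ i hi i hi
  rw [if_pos rfl, if_neg h0.ne', ← two_smul ℂ] at h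
  apply smul_right_injective _ (two_ne_zero' ℂ)
  simpa using h

/-- Spatial matrices with distinct indices multiply to a matrix of square `(-1)^{N(N+1)/2}`,
where `N` is the number of factors. -/
lemma LorentzClifford.sq_prod (hΓ : LorentzClifford d Γ) (l : List ℕ) (hl : l.Nodup)
    (hr : ∀ i ∈ l, 0 < i ∧ i < d) :
    (l.map Γ).prod * (l.map Γ).prod
      = ((-1 : ℤ) ^ (l.length * (l.length + 1) / 2)) • (1 : Matrix (Fin n) (Fin n) ℂ) := by
  have h := sq_prod_of_anticomm (l.map Γ) ?_ ?_
  · simpa using h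
  · intro x hx
    obtain ⟨i, hi, rfl⟩ := List.mem_map.1 hx
    exact hΓ.sq_pos (hr i hi).2 (hr i hi).1
  · rw [List.pairwise_map]
    exact hl.imp_of_mem fun ha hb hab => hΓ.anticomm (hr _ ha).2 (hr _ hb).2 hab

/-- The indices `1, 3, …, 2k+1`. -/
def oddIdx (k : ℕ) : List ℕ := List.ofFn fun a : Fin (k + 1) => 2 * (a : ℕ) + 1

/-- The indices `2, 4, …, 2k`. -/
def evenIdx (k : ℕ) : List ℕ := List.ofFn fun a : Fin k => 2 * ((a : ℕ) + 1)

lemma mem_oddIdx {k i : ℕ} (h : i ∈ oddIdx k) : i % 2 = 1 ∧ 0 < i ∧ i < 2 * k + 2 := by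
  obtain ⟨a, rfl⟩ := List.mem_ofFn.1 h
  omega

lemma mem_evenIdx {k i : ℕ} (h : i ∈ evenIdx k) : i % 2 = 0 ∧ 0 < i ∧ i < 2 * k + 2 := by
  obtain ⟨a, rfl⟩ := List.mem_ofFn.1 h
  omega

lemma nodup_oddIdx (k : ℕ) : (oddIdx k).Nodup :=
  List.nodup_ofFn.2 fun a b h => Fin.ext (by simpa using h)

lemma nodup_evenIdx (k : ℕ) : (evenIdx k).Nodup :=
  List.nodup_ofFn.2 fun a b h => Fin.ext (by simpa using h)

lemma disjoint_idx (k : ℕ) : (oddIdx k).Disjoint (evenIdx k) := fun i h h' => by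
  have := mem_oddIdx h
  have := mem_evenIdx h'
  omega

lemma neg_one_pow_idx (k : ℕ) :
    (-1 : ℤ) ^ ((2 * k + 1) * (2 * k + 1 + 1) / 2) = (-1) ^ (k + 1) := by
  rw [show (2 * k + 1) * (2 * k + 1 + 1) = ((k + 1) + 2 * (k * (k + 1))) * 2 by ring,
    Nat.mul_div_cancel _ two_pos, pow_add, pow_mul (-1 : ℤ) 2]
  simp

end Gamma

/-- For `d = 2k+2`: if `k` is odd, with `M_T = η_T Γ^1 Γ^3 ⋯ Γ^{2k+1}` and
`M_C = η_C Γ^2 Γ^4 ⋯ Γ^{2k}`, one has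
`conj(M_T M_C) conj(M_T) conj(M_C) = (η_T^* η_C^*)² I`; if `k` is even, with
`M_T = η_T Γ^0 Γ^2 ⋯ Γ^{2k}` and `M_C = η_C Γ^0 Γ^1 Γ^3 ⋯ Γ^{2k+1}`, one has
`conj(M_T M_C) conj(M_T) conj(M_C) = -(η_T^* η_C^*)² I` (computing `(CT)²` on a Dirac
fermion, showing its dependence on the phases `η_C`, `η_T`). -/
theorem CT_square {n k : ℕ}
    (Γ : ℕ → Matrix (Fin n) (Fin n) ℂ)
    (hΓ : LorentzClifford (2 * k + 2) Γ)
    (hreal : ChiralReality (2 * k + 2) Γ)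
    (ηC ηT : ℂ)
    (MTodd MCodd MTeven MCeven : Matrix (Fin n) (Fin n) ℂ)
    (hMTodd : MTodd = ηT • (List.ofFn (fun a : Fin (k + 1) => Γ (2 * (a : ℕ) + 1))).prod)
    (hMCodd : MCodd = ηC • (List.ofFn (fun a : Fin k => Γ (2 * ((a : ℕ) + 1)))).prod)
    (hMTeven : MTeven = ηT • (List.ofFn (fun a : Fin (k + 1) => Γ (2 * (a : ℕ)))).prod)
    (hMCeven : MCeven = ηC •
      (Γ 0 * (List.ofFn (fun a : Fin (k + 1) => Γ (2 * (a : ℕ) + 1))).prod)) :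
    (Odd k → (MTodd * MCodd).map (starRingEnd ℂ) * MTodd.map (starRingEnd ℂ) *
        MCodd.map (starRingEnd ℂ) =
      ((starRingEnd ℂ ηT * starRingEnd ℂ ηC) ^ 2) • 1) ∧
    (Even k → (MTeven * MCeven).map (starRingEnd ℂ) * MTeven.map (starRingEnd ℂ) *
        MCeven.map (starRingEnd ℂ) =
      (-((starRingEnd ℂ ηT * starRingEnd ℂ ηC) ^ 2)) • 1) := by
  have hO : (List.ofFn (fun a : Fin (k + 1) => Γ (2 * (a : ℕ) + 1))).prod
      = ((oddIdx k).map Γ).prod := by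
    rw [oddIdx, List.map_ofFn]; rfl
  have hE : (List.ofFn (fun a : Fin k => Γ (2 * ((a : ℕ) + 1)))).prod
      = ((evenIdx k).map Γ).prod := by
    rw [evenIdx, List.map_ofFn]; rfl
  have hE0 : (List.ofFn (fun a : Fin (k + 1) => Γ (2 * (a : ℕ)))).prod
      = Γ 0 * ((evenIdx k).map Γ).prod := by
    rw [← hE, List.ofFn_succ, List.prod_cons]; rfl
  rw [hO] at hMTodd hMCeven
  rw [hE] at hMCodd
  rw [hE0] at hMTeven
  have hlO : (oddIdx k).length = k + 1 := by simp [oddIdx]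
  have hlE : (evenIdx k).length = k := by simp [evenIdx]
  have hOE := hΓ.sq_prod (oddIdx k ++ evenIdx k)
    ((nodup_oddIdx k).append (nodup_evenIdx k) (disjoint_idx k))
    (fun i hi => (List.mem_append.1 hi).elim (fun h => (mem_oddIdx h).2)
      (fun h => (mem_evenIdx h).2))
  have hEO := hΓ.sq_prod (evenIdx k ++ oddIdx k)
    ((nodup_evenIdx k).append (nodup_oddIdx k) (disjoint_idx k).symm)
    (fun i hi => (List.mem_append.1 hi).elim (fun h => (mem_evenIdx h).2)
      (fun h => (mem_oddIdx h).2))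
  rw [List.length_append, hlO, hlE, show k + 1 + k = 2 * k + 1 by ring, neg_one_pow_idx,
    List.map_append, List.prod_append] at hOE
  rw [List.length_append, hlO, hlE, show k + (k + 1) = 2 * k + 1 by ring, neg_one_pow_idx,
    List.map_append, List.prod_append] at hEO
  have h0E := prod_mul_of_anticomm (Γ 0) ((evenIdx k).map Γ) (fun x hx => by
    obtain ⟨i, hi, rfl⟩ := List.mem_map.1 hx
    have := mem_evenIdx hi
    exact hΓ.anticomm (by omega) this.2.2 (by omega))
  rw [List.length_map, hlE] at h0E
  have hcO := map_prod_of_map_eq_smul (starRingEnd ℂ).mapMatrix 1 ((oddIdx k).map Γ)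
    (fun x hx => by
      obtain ⟨i, hi, rfl⟩ := List.mem_map.1 hx
      have := mem_oddIdx hi
      simpa using hreal.2.1 i this.2.1 this.2.2 this.1)
  have hcE := map_prod_of_map_eq_smul (starRingEnd ℂ).mapMatrix (-1) ((evenIdx k).map Γ)
    (fun x hx => by
      obtain ⟨i, hi, rfl⟩ := List.mem_map.1 hx
      have := mem_evenIdx hi
      simpa using hreal.2.2 i this.2.1 this.2.2 this.1)
  rw [one_pow, one_smul] at hcO
  rw [List.length_map, hlE] at hcE
  have hc0 : (starRingEnd ℂ).mapMatrix (Γ 0) = Γ 0 := hreal.1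
  have hcs : ∀ (c : ℂ) (M : Matrix (Fin n) (Fin n) ℂ), (starRingEnd ℂ).mapMatrix (c • M)
      = starRingEnd ℂ c • (starRingEnd ℂ).mapMatrix M := by
    intro c M; ext; simp
  have h00 := hΓ.sq_zero (by omega)
  simp only [← RingHom.mapMatrix_apply]
  generalize ((oddIdx k).map Γ).prod = O at *
  generalize ((evenIdx k).map Γ).prod = E at *
  subst hMTodd hMCodd hMTeven hMCeven
  refine ⟨fun hk => ?_, fun hk => ?_⟩
  · rw [hk.add_one.neg_one_pow, one_smul] at hOE
    rw [hk.neg_one_pow, neg_one_smul] at hcE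
    simp only [map_mul, hcs, hcO, hcE, smul_mul_assoc, mul_smul_comm, smul_smul]
    rw [show O * -E * O * -E = O * E * (O * E) by noncomm_ring, hOE]
    congr 1; ring
  · rw [hk.add_one.neg_one_pow, neg_one_smul] at hEO
    rw [hk.neg_one_pow, one_smul] at hcE h0E
    have hconj : Γ 0 * E * Γ 0 = E := by
      rw [mul_assoc, h0E, ← mul_assoc, h00, one_mul]
    simp only [map_mul, hcs, hcO, hcE, hc0, smul_mul_assoc, mul_smul_comm, smul_smul]
    rw [show Γ 0 * E * (Γ 0 * O) * (Γ 0 * E) * (Γ 0 * O)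
      = (Γ 0 * E * Γ 0) * O * ((Γ 0 * E * Γ 0) * O) by simp only [mul_assoc], hconj, hEO,
      smul_neg, neg_smul]
    congr 2; ring
end
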